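/- arXiv:2208.05954 — 3 statements merged into one kernel-verified Lean document; each statement's English description precedes it below -/
import Mathlib

section
/- Let I ⊆ ℝ be an open interval, s₀ ∈ I, and n ≥ 1. Let U, V : I → Mₙ(ℝ) be continuous with U(s) and V(s) orthogonal for every s ∈ I, let σ₁, …, σₙ : I → ℝ be continuous, and set A(s) = U(s)·diag(σ₁(s), …, σₙ(s))·V(s)ᵀ. Assume σₙ(s₀) = 0 and σᵢ(s₀) ≠ 0 for 1 ≤ i ≤ n−1. Then there exist δ > 0 and ε ∈ {−1, 1} such that for all s with |s−s₀| < δ one has sgn(det A(s)) · min_{1≤i≤n} |σᵢ(s)| = ε·σₙ(s), where sgn(x) = 1, 0, −1 according to x > 0, x = 0, x < 0. Consequently, if the σᵢ are real-analytic, the function s ↦ sgn(det A(s))·min_i |σᵢ(s)| is real-analytic in a neighborhood of s₀ even though min_i |σᵢ(s)| itself has a slope discontinuity at s₀. -/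
open Matrix

/-- Suppose `A(s) = U(s)·diag(σ₁(s),…,σₙ(s))·V(s)ᵀ` on an open interval, with `U`, `V`
continuous and orthogonal and the `σᵢ` continuous, and suppose at `s₀` the last `σ` vanishes
while all the others are nonzero.  Then near `s₀` the signed smallest singular value
`sgn(det A(s))·minᵢ|σᵢ(s)|` equals `ε·σₙ(s)` for a fixed sign `ε ∈ {−1,1}`; consequently, if
the `σᵢ` are real-analytic then this signed smallest singular value is real-analytic in a
neighborhood of `s₀`, even though `minᵢ|σᵢ(s)|` itself has a slope discontinuity at `s₀`. -/
theorem signed_min_singular_value_smooth (m : ℕ) (a b s₀ : ℝ)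
    (hs₀ : s₀ ∈ Set.Ioo a b)
    (U V : ℝ → Matrix (Fin (m + 1)) (Fin (m + 1)) ℝ)
    (hUc : ContinuousOn U (Set.Ioo a b)) (hVc : ContinuousOn V (Set.Ioo a b))
    (hU : ∀ s ∈ Set.Ioo a b, (U s)ᵀ * U s = 1)
    (hV : ∀ s ∈ Set.Ioo a b, (V s)ᵀ * V s = 1)
    (σ : Fin (m + 1) → ℝ → ℝ)
    (hσc : ∀ i, ContinuousOn (σ i) (Set.Ioo a b))
    (A : ℝ → Matrix (Fin (m + 1)) (Fin (m + 1)) ℝ)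
    (hA : ∀ s, A s = U s * Matrix.diagonal (fun i => σ i s) * (V s)ᵀ)
    (hlast : σ (Fin.last m) s₀ = 0)
    (hother : ∀ i : Fin (m + 1), i ≠ Fin.last m → σ i s₀ ≠ 0) :
    (∃ δ > 0, ∃ ε : ℝ, (ε = 1 ∨ ε = -1) ∧
      ∀ s ∈ Set.Ioo a b, |s - s₀| < δ →
        Real.sign (A s).det *
            (Finset.univ.inf' Finset.univ_nonempty fun i : Fin (m + 1) => |σ i s|) =
          ε * σ (Fin.last m) s) ∧
    ((∀ i, AnalyticOnNhd ℝ (σ i) (Set.Ioo a b)) →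
      ∃ δ > 0, Set.Ioo (s₀ - δ) (s₀ + δ) ⊆ Set.Ioo a b ∧
        AnalyticOnNhd ℝ
          (fun s => Real.sign (A s).det *
            (Finset.univ.inf' Finset.univ_nonempty fun i : Fin (m + 1) => |σ i s|))
          (Set.Ioo (s₀ - δ) (s₀ + δ))) := by
  have hnhds : Set.Ioo a b ∈ nhds s₀ := Ioo_mem_nhds hs₀.1 hs₀.2
  have hσa : ∀ i, ContinuousAt (σ i) s₀ := fun i => (hσc i).continuousAt hnhds
  have hUa : ContinuousAt U s₀ := hUc.continuousAt hnhds
  have hVa : ContinuousAt V s₀ := hVc.continuousAt hnhds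
  -- the determinant with the last factor removed
  set g : ℝ → ℝ := fun s =>
    (U s).det * (∏ i : Fin m, σ i.castSucc s) * (V s).det with hg
  have hga : ContinuousAt g s₀ := by
    have h1 : ContinuousAt (fun s => (U s).det) s₀ :=
      (Continuous.matrix_det continuous_id).continuousAt.comp hUa
    have h2 : ContinuousAt (fun s => (V s).det) s₀ :=
      (Continuous.matrix_det continuous_id).continuousAt.comp hVa
    have h3 : ContinuousAt (fun s => ∏ i : Fin m, σ i.castSucc s) s₀ :=
      tendsto_finsetProd _ (fun i _ => hσa i.castSucc)
    exact (h1.mul h3).mul h2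
  have hdet0 : ∀ M : Matrix (Fin (m + 1)) (Fin (m + 1)) ℝ, Mᵀ * M = 1 → M.det ≠ 0 := by
    intro M hM h0
    have := congrArg Matrix.det hM
    rw [Matrix.det_mul, h0] at this
    simp at this
  have hg0 : g s₀ ≠ 0 := by
    refine mul_ne_zero (mul_ne_zero (hdet0 _ (hU _ hs₀)) ?_) (hdet0 _ (hV _ hs₀))
    exact Finset.prod_ne_zero_iff.2 fun i _ => hother _ (Fin.castSucc_lt_last i).ne
  have hdet : ∀ s, (A s).det = g s * σ (Fin.last m) s := by
    intro s
    rw [hA, Matrix.det_mul, Matrix.det_mul, Matrix.det_diagonal, Matrix.det_transpose,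
      Fin.prod_univ_castSucc]
    simp only [hg]
    ring
  have hsg : ∀ᶠ s in nhds s₀, 0 < g s * g s₀ :=
    (hga.mul continuousAt_const).eventually (lt_mem_nhds (mul_self_pos.2 hg0))
  have hmin : ∀ᶠ s in nhds s₀, ∀ i, |σ (Fin.last m) s| ≤ |σ i s| := by
    rw [Filter.eventually_all]
    intro i
    by_cases hi : i = Fin.last m
    · subst hi
      exact Filter.Eventually.of_forall fun _ => le_rfl
    · have : |σ (Fin.last m) s₀| < |σ i s₀| := by
        rw [hlast, abs_zero]
        exact abs_pos.2 (hother i hi)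
      exact ((hσa _).abs.eventually_lt (hσa i).abs this).mono fun _ h => h.le
  have key : ∃ ε : ℝ, (ε = 1 ∨ ε = -1) ∧ ∀ s, 0 < g s * g s₀ →
      Real.sign (g s * σ (Fin.last m) s) * |σ (Fin.last m) s| = ε * σ (Fin.last m) s := by
    rcases lt_or_gt_of_ne hg0 with h | h
    · refine ⟨-1, Or.inr rfl, fun s hs => ?_⟩
      have hgs : g s < 0 := neg_of_mul_pos_left hs h.le
      rcases lt_trichotomy (σ (Fin.last m) s) 0 with h' | h' | h'
      · rw [Real.sign_of_pos (mul_pos_of_neg_of_neg hgs h'), abs_of_neg h']; ring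
      · simp [h']
      · rw [Real.sign_of_neg (mul_neg_of_neg_of_pos hgs h'), abs_of_pos h']
    · refine ⟨1, Or.inl rfl, fun s hs => ?_⟩
      have hgs : 0 < g s := pos_of_mul_pos_left hs h.le
      rcases lt_trichotomy (σ (Fin.last m) s) 0 with h' | h' | h'
      · rw [Real.sign_of_neg (mul_neg_of_pos_of_neg hgs h'), abs_of_neg h']; ring
      · simp [h']
      · rw [Real.sign_of_pos (mul_pos hgs h'), abs_of_pos h']
  obtain ⟨ε, hε, key⟩ := key
  obtain ⟨δ, hδ, H⟩ := Metric.eventually_nhds_iff.1 (hsg.and (hmin.and hnhds))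
  have main : ∀ s, |s - s₀| < δ →
      Real.sign (A s).det *
          (Finset.univ.inf' Finset.univ_nonempty fun i : Fin (m + 1) => |σ i s|) =
        ε * σ (Fin.last m) s := by
    intro s hs
    obtain ⟨h1, h2, -⟩ := H (y := s) (by rwa [Real.dist_eq])
    have hinf : (Finset.univ.inf' Finset.univ_nonempty fun i : Fin (m + 1) => |σ i s|) =
        |σ (Fin.last m) s| :=
      le_antisymm (Finset.inf'_le _ (Finset.mem_univ _)) (Finset.le_inf' _ _ fun i _ => h2 i)
    rw [hinf, hdet]
    exact key s h1
  have habs : ∀ s ∈ Set.Ioo (s₀ - δ) (s₀ + δ), |s - s₀| < δ := by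
    intro s hs
    rw [abs_lt]
    constructor <;> linarith [hs.1, hs.2]
  have hsub : Set.Ioo (s₀ - δ) (s₀ + δ) ⊆ Set.Ioo a b := fun s hs =>
    (H (y := s) (by rw [Real.dist_eq]; exact habs s hs)).2.2
  refine ⟨⟨δ, hδ, ε, hε, fun s _ hs => main s hs⟩, fun han => ⟨δ, hδ, hsub, ?_⟩⟩
  have h : AnalyticOnNhd ℝ (fun s => ε * σ (Fin.last m) s) (Set.Ioo (s₀ - δ) (s₀ + δ)) :=
    fun s hs => analyticAt_const.mul (han _ s (hsub hs))
  exact h.congr isOpen_Ioo fun s hs => (main s (habs s hs)).symm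
end

section
/- With η, ξ, J, κ and the linear map L as in the boundedness setup (η(α₁,α₂) = η̃(α₁) periodic, real-valued, with J nonvanishing), fix integers l₁, l₂ and let η̇(α₁,α₂) = e^{i(l₁α₁ + l₂α₂)}. Then there exists a 2π-periodic function u of one variable such that L(η̇, 0, 0)(α₁,α₂) = u(α₁)·e^{i l₂ α₂}; equivalently, every Fourier coefficient of L(η̇, 0, 0) with second index different from l₂ vanishes. Hence L leaves each Bloch subspace {f : f̂(j₁,j₂) = 0 for j₂ ≠ l₂} invariant when linearizing about a periodic state. -/
open MeasureTheory

noncomputable section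

/-- Fourier coefficient `f̂(j₁,j₂)` of a `2π×2π`-periodic function on `ℝ²`. -/
def fcoeff (f : ℝ × ℝ → ℂ) (j : ℤ × ℤ) : ℂ :=
  (((2 * Real.pi) ^ 2 : ℝ) : ℂ)⁻¹ *
    ∫ a in (0 : ℝ)..(2 * Real.pi), ∫ c in (0 : ℝ)..(2 * Real.pi),
      f (a, c) * Complex.exp (-Complex.I * ((j.1 : ℂ) * (a : ℂ) + (j.2 : ℂ) * (c : ℂ)))

/-- Membership in the space `V_σ`: `Σ |f̂(j₁,j₂)|²·e^{2σ(|j₁|+|j₂|)} < ∞`. -/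
def MemVF (σ : ℝ) (f : ℝ × ℝ → ℂ) : Prop :=
  Summable fun j : ℤ × ℤ => ‖fcoeff f j‖ ^ 2 * Real.exp (2 * σ * (|(j.1 : ℝ)| + |(j.2 : ℝ)|))

/-- The norm of the space `V_σ`: `‖f‖² = Σ |f̂(j₁,j₂)|²·e^{2σ(|j₁|+|j₂|)}`. -/
def VnormF (σ : ℝ) (f : ℝ × ℝ → ℂ) : ℝ :=
  Real.sqrt (∑' j : ℤ × ℤ, ‖fcoeff f j‖ ^ 2 * Real.exp (2 * σ * (|(j.1 : ℝ)| + |(j.2 : ℝ)|)))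

/-- The quasi-periodic Hilbert transform: the Fourier multiplier sending `f̂(j₁,j₂)` to
`(−i)·sgn(j₁ + k·j₂)·f̂(j₁,j₂)`. -/
def Hqp (k : ℝ) (f : ℝ × ℝ → ℂ) : ℝ × ℝ → ℂ := fun x =>
  ∑' j : ℤ × ℤ,
    (-Complex.I) * ((Real.sign ((j.1 : ℝ) + k * (j.2 : ℝ)) : ℝ) : ℂ) * fcoeff f j *
      Complex.exp (Complex.I * ((j.1 : ℂ) * (x.1 : ℂ) + (j.2 : ℂ) * (x.2 : ℂ)))

/-- The directional derivative `∂_α = ∂_{α₁} + k·∂_{α₂}` on torus functions. -/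
def dA (k : ℝ) (f : ℝ × ℝ → ℂ) : ℝ × ℝ → ℂ := fun x => fderiv ℝ f x (1, k)

/-- The mean `P₀ f` of a torus function over `[0,2π]²`. -/
def meanT (f : ℝ × ℝ → ℂ) : ℂ :=
  (((2 * Real.pi) ^ 2 : ℝ) : ℂ)⁻¹ *
    ∫ a in (0 : ℝ)..(2 * Real.pi), ∫ c in (0 : ℝ)..(2 * Real.pi), f (a, c)

/-- The projection `P = id − P₀` removing the mean. -/
def Pproj (f : ℝ × ℝ → ℂ) : ℝ × ℝ → ℂ := fun x => f x - meanT f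

/-- `J = (1 + ∂_αξ)² + (∂_αη)²` with `ξ = H[η]`. -/
def JF (k : ℝ) (η : ℝ × ℝ → ℂ) : ℝ × ℝ → ℂ := fun x =>
  (1 + dA k (Hqp k η) x) ^ 2 + dA k η x ^ 2

/-- `κ = ((1+∂_αξ)·∂_α²η − (∂_αη)·∂_α²ξ)/J^{3/2}` with `ξ = H[η]`. -/
def kappaF (k : ℝ) (η : ℝ × ℝ → ℂ) : ℝ × ℝ → ℂ := fun x =>
  ((1 + dA k (Hqp k η) x) * dA k (dA k η) x - dA k η x * dA k (dA k (Hqp k η)) x) /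
    JF k η x ^ ((3 : ℂ) / 2)

/-- `J̇ = 2[(1+∂_αξ)·∂_αξ̇ + (∂_αη)·(∂_αη̇)]` with `ξ = H[η]`, `ξ̇ = H[η̇]`. -/
def JdotF (k : ℝ) (η ηd : ℝ × ℝ → ℂ) : ℝ × ℝ → ℂ := fun x =>
  2 * ((1 + dA k (Hqp k η) x) * dA k (Hqp k ηd) x + dA k η x * dA k ηd x)

/-- `κ̇ = −(3κ/(2J))·J̇ + J^{−3/2}[(∂_α²η)(∂_αξ̇) + (1+∂_αξ)(∂_α²η̇)
      − (∂_α²ξ)(∂_αη̇) − (∂_αη)(∂_α²ξ̇)]`. -/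
def kappadotF (k : ℝ) (η ηd : ℝ × ℝ → ℂ) : ℝ × ℝ → ℂ := fun x =>
  -(3 * kappaF k η x / (2 * JF k η x)) * JdotF k η ηd x +
    (JF k η x ^ ((3 : ℂ) / 2))⁻¹ *
      (dA k (dA k η) x * dA k (Hqp k ηd) x
        + (1 + dA k (Hqp k η) x) * dA k (dA k ηd) x
        - dA k (dA k (Hqp k η)) x * dA k ηd x
        - dA k η x * dA k (dA k (Hqp k ηd)) x)

/-- The linearized traveling-wave operator
`L(η̇, τ̇, ḃ) = P[ ḃ/(2J) − (b/(2J²))·J̇ + g·η̇ − τ·κ̇ − κ·τ̇ ]`. -/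
def Lmap (k g τ b : ℝ) (η ηd : ℝ × ℝ → ℂ) (τd bd : ℂ) : ℝ × ℝ → ℂ :=
  Pproj fun x =>
    bd / (2 * JF k η x) - ((b : ℂ) / (2 * JF k η x ^ 2)) * JdotF k η ηd x
      + (g : ℂ) * ηd x - (τ : ℂ) * kappadotF k η ηd x - kappaF k η x * τd

/-- Bloch equivariance with second wave number `l`. -/
def BlochEq (l : ℤ) (F : ℝ × ℝ → ℂ) : Prop :=
  (∀ x : ℝ × ℝ, ∀ t : ℝ, F (x + (0, t)) = Complex.exp (Complex.I * (l : ℂ) * (t : ℂ)) * F x) ∧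
    ∀ x : ℝ × ℝ, F (x + (2 * Real.pi, 0)) = F x

lemma BlochEq.form {l : ℤ} {F : ℝ × ℝ → ℂ} (h : BlochEq l F) (a c : ℝ) :
    F (a, c) = F (a, 0) * Complex.exp (Complex.I * (l : ℂ) * (c : ℂ)) := by
  have := h.1 (a, 0) c
  simp only [Prod.mk_add_mk, add_zero, zero_add] at this
  rw [this, mul_comm]

lemma integral_exp_int (n : ℤ) (hn : n ≠ 0) :
    ∫ c in (0 : ℝ)..(2 * Real.pi), Complex.exp (Complex.I * (n : ℂ) * (c : ℂ)) = 0 := by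
  have hc : Complex.I * (n : ℂ) ≠ 0 := mul_ne_zero Complex.I_ne_zero (by exact_mod_cast hn)
  rw [integral_exp_mul_complex hc]
  have : Complex.exp (Complex.I * (n : ℂ) * ((2 * Real.pi : ℝ) : ℂ)) = 1 := by
    rw [Complex.exp_eq_one_iff]
    exact ⟨n, by push_cast; ring⟩
  rw [this]; simp

lemma BlochEq.fcoeff_eq_zero {l : ℤ} {F : ℝ × ℝ → ℂ} (h : BlochEq l F) (j : ℤ × ℤ)
    (hj : j.2 ≠ l) : fcoeff F j = 0 := by
  have hin : ∀ a : ℝ, (∫ c in (0 : ℝ)..(2 * Real.pi),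
      F (a, c) * Complex.exp (-Complex.I * ((j.1 : ℂ) * (a : ℂ) + (j.2 : ℂ) * (c : ℂ)))) = 0 := by
    intro a
    have : ∀ c : ℝ, F (a, c) * Complex.exp (-Complex.I * ((j.1 : ℂ) * (a : ℂ) + (j.2 : ℂ) * (c : ℂ)))
        = (F (a, 0) * Complex.exp (-Complex.I * ((j.1 : ℂ) * (a : ℂ)))) *
          Complex.exp (Complex.I * ((l - j.2 : ℤ) : ℂ) * (c : ℂ)) := by
      intro c
      rw [h.form a c, mul_assoc (F (a, 0)), mul_assoc (F (a, 0)), ← Complex.exp_add, ← Complex.exp_add]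
      congr 2
      push_cast; ring
    simp only [this]
    rw [intervalIntegral.integral_const_mul, integral_exp_int _ (sub_ne_zero.2 hj.symm), mul_zero]
  unfold fcoeff
  simp only [hin]
  simp

lemma BlochEq.Hqp {l : ℤ} {F : ℝ × ℝ → ℂ} (h : BlochEq l F) (k : ℝ) : BlochEq l (Hqp k F) := by
  constructor
  · intro x t
    unfold _root_.Hqp
    rw [← tsum_mul_left]
    congr 1; funext j
    by_cases hj : j.2 = l
    · have : Complex.exp (Complex.I * ((j.1 : ℂ) * ((x + (0, t)).1 : ℂ) + (j.2 : ℂ) * ((x + (0, t)).2 : ℂ)))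
        = Complex.exp (Complex.I * (l : ℂ) * (t : ℂ)) *
          Complex.exp (Complex.I * ((j.1 : ℂ) * (x.1 : ℂ) + (j.2 : ℂ) * (x.2 : ℂ))) := by
        rw [← Complex.exp_add, hj]
        congr 1
        simp only [Prod.fst_add, Prod.snd_add]
        push_cast; ring
      rw [this]; ring
    · rw [h.fcoeff_eq_zero j hj]; simp
  · intro x
    unfold _root_.Hqp
    congr 1; funext j
    congr 1
    rw [Complex.exp_eq_exp_iff_exists_int]
    refine ⟨j.1, ?_⟩
    simp only [Prod.fst_add, Prod.snd_add]
    push_cast; ring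

lemma dA_shift (k : ℝ) (F : ℝ × ℝ → ℂ) (v : ℝ × ℝ) (c : ℂ)
    (h : ∀ x, F (x + v) = c * F x) (x : ℝ × ℝ) : dA k F (x + v) = c * dA k F x := by
  unfold dA
  rw [← fderiv_comp_add_right]
  have : (fun y => F (y + v)) = c • F := by funext y; simp [h]
  rw [this, fderiv_const_smul_field]
  simp

lemma BlochEq.dA {l : ℤ} {F : ℝ × ℝ → ℂ} (h : BlochEq l F) (k : ℝ) : BlochEq l (dA k F) :=
  ⟨fun x t => dA_shift k F (0, t) _ (fun y => h.1 y t) x, fun x => by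
    simpa using dA_shift k F (2 * Real.pi, 0) 1 (fun y => by simpa using h.2 y) x⟩

lemma BlochEq.Pproj {l : ℤ} {F : ℝ × ℝ → ℂ} (h : BlochEq l F) : BlochEq l (Pproj F) := by
  refine ⟨fun x t => ?_, fun x => by simp only [_root_.Pproj, h.2]⟩
  simp only [_root_.Pproj, h.1]
  by_cases hl : l = 0
  · subst hl; simp
  · have h0 := h.fcoeff_eq_zero (0, 0) (Ne.symm hl)
    have : meanT F = 0 := by
      rw [← h0]; simp [meanT, fcoeff]
    rw [this]; simp

/-- Shift behaviour of the argument of the projection. -/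
lemma shift_L (k g τ b : ℝ) (η ηd : ℝ × ℝ → ℂ) (x y : ℝ × ℝ) (c : ℂ)
    (e1 : dA k η y = dA k η x) (e2 : dA k (dA k η) y = dA k (dA k η) x)
    (e3 : dA k (Hqp k η) y = dA k (Hqp k η) x)
    (e4 : dA k (dA k (Hqp k η)) y = dA k (dA k (Hqp k η)) x)
    (d0 : ηd y = c * ηd x)
    (d1 : dA k ηd y = c * dA k ηd x) (d2 : dA k (dA k ηd) y = c * dA k (dA k ηd) x)
    (d3 : dA k (Hqp k ηd) y = c * dA k (Hqp k ηd) x)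
    (d4 : dA k (dA k (Hqp k ηd)) y = c * dA k (dA k (Hqp k ηd)) x) :
    (fun x => (0 : ℂ) / (2 * JF k η x) - ((b : ℂ) / (2 * JF k η x ^ 2)) * JdotF k η ηd x
      + (g : ℂ) * ηd x - (τ : ℂ) * kappadotF k η ηd x - kappaF k η x * 0) y =
    c * (fun x => (0 : ℂ) / (2 * JF k η x) - ((b : ℂ) / (2 * JF k η x ^ 2)) * JdotF k η ηd x
      + (g : ℂ) * ηd x - (τ : ℂ) * kappadotF k η ηd x - kappaF k η x * 0) x := by
  have hJ : JF k η y = JF k η x := by simp only [JF, e1, e3]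
  have hK : kappaF k η y = kappaF k η x := by simp only [kappaF, e1, e2, e3, e4, hJ]
  have hJd : JdotF k η ηd y = c * JdotF k η ηd x := by
    simp only [JdotF, e1, e3, d1, d3]; ring
  have hKd : kappadotF k η ηd y = c * kappadotF k η ηd x := by
    simp only [kappadotF, hJ, hK, hJd, e1, e2, e3, e4, d1, d2, d3, d4]
    generalize (JF k η x ^ ((3 : ℂ) / 2))⁻¹ = A
    generalize (3 * kappaF k η x / (2 * JF k η x)) = B
    ring
  simp only [hJ, hK, hJd, hKd, d0]
  generalize ((b : ℂ) / (2 * JF k η x ^ 2)) = A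
  simp only [zero_div]
  ring

lemma BlochEq.Lmap {l : ℤ} {η ηd : ℝ × ℝ → ℂ} (k g τ b : ℝ) (h : BlochEq 0 η)
    (hd : BlochEq l ηd) : BlochEq l (Lmap k g τ b η ηd 0 0) := by
  apply BlochEq.Pproj
  have z1 : ∀ {F : ℝ × ℝ → ℂ}, BlochEq 0 F → ∀ x t, F (x + (0, t)) = F x := by
    intro F hF x t
    simpa using hF.1 x t
  constructor
  · intro x t
    exact shift_L k g τ b η ηd x (x + (0, t)) _ (z1 (h.dA k) x t) (z1 ((h.dA k).dA k) x t)
      (z1 ((h.Hqp k).dA k) x t) (z1 (((h.Hqp k).dA k).dA k) x t) (hd.1 x t) ((hd.dA k).1 x t)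
      (((hd.dA k).dA k).1 x t) (((hd.Hqp k).dA k).1 x t) ((((hd.Hqp k).dA k).dA k).1 x t)
  · intro x
    have z2 : ∀ {F : ℝ × ℝ → ℂ}, BlochEq l F → F (x + (2 * Real.pi, 0)) = 1 * F x := by
      intro F hF
      rw [one_mul, hF.2]
    have := shift_L k g τ b η ηd x (x + (2 * Real.pi, 0)) 1 ((h.dA k).2 x) (((h.dA k).dA k).2 x)
      (((h.Hqp k).dA k).2 x) ((((h.Hqp k).dA k).dA k).2 x) (z2 hd) (z2 (hd.dA k))
      (z2 ((hd.dA k).dA k)) (z2 ((hd.Hqp k).dA k)) (z2 (((hd.Hqp k).dA k).dA k))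
    rw [one_mul] at this
    exact this

/-- Bloch invariance of the linearization about a periodic state: if
`η(α₁,α₂) = η̃(α₁)` with `η̃` real-analytic, real-valued and `2π`-periodic, and `J` is
nonvanishing, then for the plane-wave perturbation `η̇ = e^{i(l₁α₁ + l₂α₂)}` there is a
`2π`-periodic function `u` of one variable with
`L(η̇,0,0)(α₁,α₂) = u(α₁)·e^{i l₂ α₂}`; equivalently, every Fourier coefficient of
`L(η̇,0,0)` whose second index differs from `l₂` vanishes.  Hence `L` leaves each Bloch
subspace `{f : f̂(j₁,j₂) = 0 for j₂ ≠ l₂}` invariant. -/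
theorem linearization_bloch_invariant (k g τ b : ℝ)
    (hk : Irrational k) (hkpos : 0 < k)
    (ηt : ℝ → ℝ) (hηt : AnalyticOnNhd ℝ ηt Set.univ)
    (hper : Function.Periodic ηt (2 * Real.pi))
    (η : ℝ × ℝ → ℂ) (hη : ∀ x : ℝ × ℝ, η x = (ηt x.1 : ℂ))
    (hJ : ∀ x : ℝ × ℝ, JF k η x ≠ 0)
    (l₁ l₂ : ℤ) :
    (∃ u : ℝ → ℂ, Function.Periodic u (2 * Real.pi) ∧
      ∀ x : ℝ × ℝ,
        Lmap k g τ b η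
            (fun y : ℝ × ℝ =>
              Complex.exp (Complex.I * ((l₁ : ℂ) * (y.1 : ℂ) + (l₂ : ℂ) * (y.2 : ℂ))))
            0 0 x =
          u x.1 * Complex.exp (Complex.I * (l₂ : ℂ) * (x.2 : ℂ))) ∧
    ∀ j : ℤ × ℤ, j.2 ≠ l₂ →
      fcoeff
        (Lmap k g τ b η
          (fun y : ℝ × ℝ =>
            Complex.exp (Complex.I * ((l₁ : ℂ) * (y.1 : ℂ) + (l₂ : ℂ) * (y.2 : ℂ))))
          0 0) j = 0 := by
  have h : BlochEq 0 η := by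
    refine ⟨fun x t => by simp [hη], fun x => ?_⟩
    simp only [hη, Prod.fst_add, hper x.1]
  have hd : BlochEq l₂ (fun y : ℝ × ℝ =>
      Complex.exp (Complex.I * ((l₁ : ℂ) * (y.1 : ℂ) + (l₂ : ℂ) * (y.2 : ℂ)))) := by
    refine ⟨fun x t => ?_, fun x => ?_⟩
    · simp only [Prod.fst_add, Prod.snd_add]
      rw [← Complex.exp_add]
      congr 1
      push_cast; ring
    · simp only [Prod.fst_add, Prod.snd_add]
      rw [Complex.exp_eq_exp_iff_exists_int]
      refine ⟨l₁, ?_⟩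
      push_cast; ring
  have hL := BlochEq.Lmap k g τ b h hd
  refine ⟨⟨fun a => Lmap k g τ b η _ 0 0 (a, 0), fun a => ?_, fun x => hL.form x.1 x.2⟩,
    fun j hj => hL.fcoeff_eq_zero j hj⟩
  simpa using hL.2 (a, 0)

end
end

section
/- Suppose η is a real-valued 2π×2π-periodic real-analytic function on ℝ² with J > 0 everywhere that satisfies R[η, τ, b] = 0 identically on ℝ². Then each of the four functions (α₁,α₂) ↦ η(α₁+π, α₂), (α₁,α₂) ↦ η(α₁, α₂+π), (α₁,α₂) ↦ η(α₁+π, α₂+π), and (α₁,α₂) ↦ η(−α₁, −α₂) also satisfies R[·, τ, b] = 0 identically (with the same τ and b). -/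
open MeasureTheory

noncomputable section

/-- The traveling-wave residual `R[η, τ, b] = P[ b/(2J) + g·η − τ·κ ]`. -/
def Residual (k g τ b : ℝ) (η : ℝ × ℝ → ℂ) : ℝ × ℝ → ℂ :=
  Pproj fun x => (b : ℂ) / (2 * JF k η x) + (g : ℂ) * η x - (τ : ℂ) * kappaF k η x

theorem dint_shift (G : ℝ × ℝ → ℂ) (h1 : ∀ a c, G (a + 2 * Real.pi, c) = G (a, c))
    (h2 : ∀ a c, G (a, c + 2 * Real.pi) = G (a, c)) (s t : ℝ) :
    (∫ a in (0 : ℝ)..(2 * Real.pi), ∫ c in (0 : ℝ)..(2 * Real.pi), G (a + s, c + t)) =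
      ∫ a in (0 : ℝ)..(2 * Real.pi), ∫ c in (0 : ℝ)..(2 * Real.pi), G (a, c) := by
  have inner : ∀ a, (∫ c in (0 : ℝ)..(2 * Real.pi), G (a, c + t)) =
      ∫ c in (0 : ℝ)..(2 * Real.pi), G (a, c) := by
    intro a
    rw [intervalIntegral.integral_comp_add_right (fun c => G (a, c)) t]
    have hp : Function.Periodic (fun c => G (a, c)) (2 * Real.pi) := fun c => h2 a c
    have := hp.intervalIntegral_add_eq t 0
    rw [zero_add, add_comm (2 * Real.pi) t, this, zero_add]
  simp only [inner]
  rw [intervalIntegral.integral_comp_add_right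
    (fun a => ∫ c in (0 : ℝ)..(2 * Real.pi), G (a, c)) s]
  have hp : Function.Periodic (fun a => ∫ c in (0 : ℝ)..(2 * Real.pi), G (a, c))
      (2 * Real.pi) := fun a => by simp only [h1]
  have := hp.intervalIntegral_add_eq s 0
  rw [zero_add, add_comm (2 * Real.pi) s, this, zero_add]

theorem dint_neg (G : ℝ × ℝ → ℂ) (h1 : ∀ a c, G (a + 2 * Real.pi, c) = G (a, c))
    (h2 : ∀ a c, G (a, c + 2 * Real.pi) = G (a, c)) :
    (∫ a in (0 : ℝ)..(2 * Real.pi), ∫ c in (0 : ℝ)..(2 * Real.pi), G (-a, -c)) =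
      ∫ a in (0 : ℝ)..(2 * Real.pi), ∫ c in (0 : ℝ)..(2 * Real.pi), G (a, c) := by
  have inner : ∀ a, (∫ c in (0 : ℝ)..(2 * Real.pi), G (a, -c)) =
      ∫ c in (0 : ℝ)..(2 * Real.pi), G (a, c) := by
    intro a
    rw [intervalIntegral.integral_comp_neg (fun c => G (a, c))]
    have hp : Function.Periodic (fun c => G (a, c)) (2 * Real.pi) := fun c => h2 a c
    have := hp.intervalIntegral_add_eq (-(2 * Real.pi)) 0
    rw [neg_add_cancel, zero_add] at this
    rw [neg_zero, this]
  simp only [inner]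
  rw [intervalIntegral.integral_comp_neg
    (fun a => ∫ c in (0 : ℝ)..(2 * Real.pi), G (a, c))]
  have hp : Function.Periodic (fun a => ∫ c in (0 : ℝ)..(2 * Real.pi), G (a, c))
      (2 * Real.pi) := fun a => by simp only [h1]
  have := hp.intervalIntegral_add_eq (-(2 * Real.pi)) 0
  rw [neg_add_cancel, zero_add] at this
  rw [neg_zero, this]

theorem char_per (m n : ℤ) (a c : ℂ) :
    Complex.exp (-Complex.I * ((m : ℂ) * (a + 2 * Real.pi) + (n : ℂ) * c)) =
      Complex.exp (-Complex.I * ((m : ℂ) * a + (n : ℂ) * c)) := by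
  rw [Complex.exp_eq_exp_iff_exists_int]
  exact ⟨-m, by push_cast; ring⟩

theorem G_per (η : ℝ × ℝ → ℂ)
    (hper₁ : ∀ x : ℝ × ℝ, η (x.1 + 2 * Real.pi, x.2) = η x)
    (hper₂ : ∀ x : ℝ × ℝ, η (x.1, x.2 + 2 * Real.pi) = η x) (j : ℤ × ℤ) (G : ℝ × ℝ → ℂ)
    (hG : G = fun y => η y *
      Complex.exp (-Complex.I * ((j.1 : ℂ) * (y.1 : ℂ) + (j.2 : ℂ) * (y.2 : ℂ)))) :
    (∀ a c, G (a + 2 * Real.pi, c) = G (a, c)) ∧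
      (∀ a c, G (a, c + 2 * Real.pi) = G (a, c)) := by
  subst hG
  refine ⟨fun a c => ?_, fun a c => ?_⟩
  · have := char_per j.1 j.2 a c
    have h := hper₁ (a, c)
    dsimp only at h ⊢
    push_cast
    rw [h, this]
  · have := char_per j.2 j.1 c a
    have h := hper₂ (a, c)
    dsimp only at h ⊢
    push_cast
    rw [h, add_comm ((j.1 : ℂ) * (a : ℂ)), this, add_comm ((j.1 : ℂ) * (a : ℂ))]

theorem fcoeff_shift (η : ℝ × ℝ → ℂ)
    (hper₁ : ∀ x : ℝ × ℝ, η (x.1 + 2 * Real.pi, x.2) = η x)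
    (hper₂ : ∀ x : ℝ × ℝ, η (x.1, x.2 + 2 * Real.pi) = η x) (s t : ℝ) (j : ℤ × ℤ) :
    fcoeff (fun y => η (y.1 + s, y.2 + t)) j =
      fcoeff η j * Complex.exp (Complex.I * ((j.1 : ℂ) * (s : ℂ) + (j.2 : ℂ) * (t : ℂ))) := by
  obtain ⟨h1, h2⟩ := G_per η hper₁ hper₂ j _ rfl
  have h := dint_shift (fun y : ℝ × ℝ => η y *
    Complex.exp (-Complex.I * ((j.1 : ℂ) * (y.1 : ℂ) + (j.2 : ℂ) * (y.2 : ℂ)))) h1 h2 s t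
  dsimp only at h
  unfold fcoeff
  rw [mul_assoc, ← h, ← intervalIntegral.integral_mul_const]
  congr 2
  funext a
  rw [← intervalIntegral.integral_mul_const]
  congr 1
  funext c
  dsimp only
  rw [mul_assoc, ← Complex.exp_add]
  congr 2
  push_cast
  ring

theorem fcoeff_neg (η : ℝ × ℝ → ℂ)
    (hper₁ : ∀ x : ℝ × ℝ, η (x.1 + 2 * Real.pi, x.2) = η x)
    (hper₂ : ∀ x : ℝ × ℝ, η (x.1, x.2 + 2 * Real.pi) = η x) (j : ℤ × ℤ) :
    fcoeff (fun y => η (-y.1, -y.2)) j = fcoeff η (-j) := by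
  obtain ⟨h1, h2⟩ := G_per η hper₁ hper₂ (-j) _ rfl
  have h := dint_neg (fun y : ℝ × ℝ => η y *
    Complex.exp (-Complex.I * (((-j).1 : ℂ) * (y.1 : ℂ) + ((-j).2 : ℂ) * (y.2 : ℂ)))) h1 h2
  dsimp only at h
  unfold fcoeff
  rw [← h]
  congr 2
  funext a
  congr 1
  funext c
  dsimp only
  congr 2
  simp

theorem Hqp_shift (k : ℝ) (η : ℝ × ℝ → ℂ)
    (hper₁ : ∀ x : ℝ × ℝ, η (x.1 + 2 * Real.pi, x.2) = η x)
    (hper₂ : ∀ x : ℝ × ℝ, η (x.1, x.2 + 2 * Real.pi) = η x) (s t : ℝ) :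
    Hqp k (fun y => η (y.1 + s, y.2 + t)) = fun y => Hqp k η (y.1 + s, y.2 + t) := by
  funext y
  unfold Hqp
  refine tsum_congr fun j => ?_
  rw [fcoeff_shift η hper₁ hper₂, ← mul_assoc, mul_assoc _ (Complex.exp _) (Complex.exp _),
    ← Complex.exp_add]
  congr 2
  push_cast
  ring

theorem Hqp_neg (k : ℝ) (η : ℝ × ℝ → ℂ)
    (hper₁ : ∀ x : ℝ × ℝ, η (x.1 + 2 * Real.pi, x.2) = η x)
    (hper₂ : ∀ x : ℝ × ℝ, η (x.1, x.2 + 2 * Real.pi) = η x) :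
    Hqp k (fun y => η (-y.1, -y.2)) = fun y => -Hqp k η (-y.1, -y.2) := by
  funext y
  unfold Hqp
  rw [← tsum_neg, ← (Equiv.neg (ℤ × ℤ)).tsum_eq]
  refine tsum_congr fun j => ?_
  rw [fcoeff_neg η hper₁ hper₂]
  simp only [Equiv.neg_apply, neg_neg, Prod.fst_neg, Prod.snd_neg]
  have hs : Real.sign (((-j.1 : ℤ) : ℝ) + k * ((-j.2 : ℤ) : ℝ)) =
      -Real.sign ((j.1 : ℝ) + k * (j.2 : ℝ)) := by
    rw [← Real.sign_neg]
    congr 1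
    push_cast
    ring
  rw [hs]
  push_cast
  have he : ∀ p q : ℂ, Complex.I * (-(j.1 : ℂ) * p + -(j.2 : ℂ) * q) =
      Complex.I * ((j.1 : ℂ) * -p + (j.2 : ℂ) * -q) := fun p q => by ring
  rw [he]
  ring

theorem dA_shift_s12 (k : ℝ) (f : ℝ × ℝ → ℂ) (s t : ℝ) :
    dA k (fun y => f (y.1 + s, y.2 + t)) = fun y => dA k f (y.1 + s, y.2 + t) := by
  funext y
  have := fderiv_comp_add_right (𝕜 := ℝ) (f := f) (x := y) (s, t)
  exact congrArg (fun L => L (1, k)) this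

theorem dA_neg (k : ℝ) (f : ℝ × ℝ → ℂ) :
    dA k (fun y => f (-y.1, -y.2)) = fun y => -dA k f (-y.1, -y.2) := by
  funext y
  have := (ContinuousLinearEquiv.neg ℝ (M := ℝ × ℝ)).comp_right_fderiv (f := f) (x := y)
  have h := congrArg (fun L => L (1, k)) this
  refine h.trans ?_
  change fderiv ℝ f (-y) (-(1, k)) = _
  rw [map_neg]
  rfl

theorem dA_neg' (k : ℝ) (f : ℝ × ℝ → ℂ) : dA k (fun y => -f y) = fun y => -dA k f y := by
  funext y
  unfold dA
  rw [fderiv_fun_neg]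
  rfl

theorem meanT_const (c : ℂ) : meanT (fun _ => c) = c := by
  have hpi : (Real.pi : ℂ) ≠ 0 := by exact_mod_cast Real.pi_ne_zero
  simp [meanT]
  field_simp

theorem residual_of_comp (k g τ b : ℝ) (η ζ : ℝ × ℝ → ℂ) (φ : ℝ × ℝ → ℝ × ℝ)
    (hη : ∀ x, ζ x = η (φ x)) (hJ : ∀ x, JF k ζ x = JF k η (φ x))
    (hκ : ∀ x, kappaF k ζ x = kappaF k η (φ x))
    (hsol : ∀ x : ℝ × ℝ, Residual k g τ b η x = 0) (x : ℝ × ℝ) :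
    Residual k g τ b ζ x = 0 := by
  have hc : ∀ x, (b : ℂ) / (2 * JF k η x) + (g : ℂ) * η x - (τ : ℂ) * kappaF k η x =
      meanT fun x => (b : ℂ) / (2 * JF k η x) + (g : ℂ) * η x - (τ : ℂ) * kappaF k η x :=
    fun x => sub_eq_zero.mp (hsol x)
  generalize meanT _ = m at hc
  unfold Residual Pproj
  simp only [hη, hJ, hκ, hc, meanT_const, sub_self]

theorem residual_shift (k g τ b : ℝ) (η : ℝ × ℝ → ℂ)
    (hper₁ : ∀ x : ℝ × ℝ, η (x.1 + 2 * Real.pi, x.2) = η x)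
    (hper₂ : ∀ x : ℝ × ℝ, η (x.1, x.2 + 2 * Real.pi) = η x) (s t : ℝ)
    (hsol : ∀ x : ℝ × ℝ, Residual k g τ b η x = 0) (x : ℝ × ℝ) :
    Residual k g τ b (fun y => η (y.1 + s, y.2 + t)) x = 0 := by
  have hJ : ∀ x, JF k (fun y => η (y.1 + s, y.2 + t)) x = JF k η (x.1 + s, x.2 + t) := by
    intro x
    simp only [JF, Hqp_shift k η hper₁ hper₂, dA_shift_s12]
  refine residual_of_comp k g τ b η _ (fun y => (y.1 + s, y.2 + t)) (fun _ => rfl) hJ ?_ hsol x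
  intro x
  simp only [kappaF, hJ, Hqp_shift k η hper₁ hper₂, dA_shift_s12]

theorem residual_neg (k g τ b : ℝ) (η : ℝ × ℝ → ℂ)
    (hper₁ : ∀ x : ℝ × ℝ, η (x.1 + 2 * Real.pi, x.2) = η x)
    (hper₂ : ∀ x : ℝ × ℝ, η (x.1, x.2 + 2 * Real.pi) = η x)
    (hsol : ∀ x : ℝ × ℝ, Residual k g τ b η x = 0) (x : ℝ × ℝ) :
    Residual k g τ b (fun y => η (-y.1, -y.2)) x = 0 := by
  have hJ : ∀ x, JF k (fun y => η (-y.1, -y.2)) x = JF k η (-x.1, -x.2) := by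
    intro x
    simp only [JF, Hqp_neg k η hper₁ hper₂, dA_neg', dA_neg, neg_neg, neg_sq]
  refine residual_of_comp k g τ b η _ (fun y => (-y.1, -y.2)) (fun _ => rfl) hJ ?_ hsol x
  intro x
  simp only [kappaF, hJ, Hqp_neg k η hper₁ hper₂, dA_neg', dA_neg, neg_neg, neg_mul_neg]

/-- Symmetries of traveling-wave solutions: if `η` is a real-valued, `2π×2π`-periodic,
real-analytic solution of `R[η, τ, b] = 0` with `J > 0` everywhere, then the translates
`η(α₁+π, α₂)`, `η(α₁, α₂+π)`, `η(α₁+π, α₂+π)` and the reflection `η(−α₁, −α₂)` are also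
solutions with the same `τ` and `b`. -/
theorem residual_symmetries (k g τ b : ℝ) (hk : Irrational k) (hkpos : 0 < k)
    (η : ℝ × ℝ → ℂ)
    (hreal : ∀ x : ℝ × ℝ, (η x).im = 0)
    (hper₁ : ∀ x : ℝ × ℝ, η (x.1 + 2 * Real.pi, x.2) = η x)
    (hper₂ : ∀ x : ℝ × ℝ, η (x.1, x.2 + 2 * Real.pi) = η x)
    (hanalytic : AnalyticOnNhd ℝ η Set.univ)
    (hJ : ∀ x : ℝ × ℝ, 0 < (JF k η x).re ∧ (JF k η x).im = 0)
    (hsol : ∀ x : ℝ × ℝ, Residual k g τ b η x = 0) :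
    (∀ x : ℝ × ℝ, Residual k g τ b (fun y : ℝ × ℝ => η (y.1 + Real.pi, y.2)) x = 0) ∧
    (∀ x : ℝ × ℝ, Residual k g τ b (fun y : ℝ × ℝ => η (y.1, y.2 + Real.pi)) x = 0) ∧
    (∀ x : ℝ × ℝ, Residual k g τ b (fun y : ℝ × ℝ => η (y.1 + Real.pi, y.2 + Real.pi)) x = 0) ∧
    (∀ x : ℝ × ℝ, Residual k g τ b (fun y : ℝ × ℝ => η (-y.1, -y.2)) x = 0) := by
  refine ⟨fun x => ?_, fun x => ?_, fun x => ?_, fun x => ?_⟩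
  · simpa using residual_shift k g τ b η hper₁ hper₂ Real.pi 0 hsol x
  · simpa using residual_shift k g τ b η hper₁ hper₂ 0 Real.pi hsol x
  · exact residual_shift k g τ b η hper₁ hper₂ Real.pi Real.pi hsol x
  · exact residual_neg k g τ b η hper₁ hper₂ hsol x

end
end
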